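/- Let M be a given consumer rate budget. For every κ₀ > 0 and every α with 0 < α < 1/2 there exist a positive integer N₀ and a constant ε₀ > 0 such that for N > N₀ the following holds: if Ω* = (μ*_infl, Λ*, X*) is a Nash equilibrium of the proxy game such that Σ_{z≠y} I(μ*_infl(z)) ≥ α·N·κ₀ for all y ∈ C, then μ*(y_infl|y) > ε₀ for all y ∈ C. -/

import Mathlib

open scoped Classical

noncomputable section

/-- Points of the `d`-dimensional Euclidean space. -/
abbrev E (d : ℕ) : Type := EuclideanSpace ℝ (Fin d)

/-- An allocation `Ω = (μ_infl, Λ, X)`: `muI z` is the rate with which the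
influencer follows producer `z`; `mu z y` is the rate with which consumer `y`
follows producer `z` directly; `muY y` is the rate with which consumer `y`
follows the influencer; `lam y` is the rate with which consumer `y` follows
outside sources; `X z` is the content topic created by producer `z`. -/
structure Alloc (d : ℕ) where
  muI : E d → ℝ
  mu  : E d → E d → ℝ
  muY : E d → ℝ
  lam : E d → ℝ
  X   : E d → E d

variable (d : ℕ)

/-- Admissibility of an allocation: nonnegative rates, the rate budget `M_infl`
of the influencer, the rate budget `M` of each consumer, and contents in `T`. -/
def Admissible (T : Set (E d)) (C : Finset (E d)) (Minfl M : ℝ) (Ω : Alloc d) : Prop :=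
  (∀ z ∈ C, 0 ≤ Ω.muI z) ∧ ((∑ z ∈ C, Ω.muI z) ≤ Minfl) ∧
  (∀ y ∈ C, (∀ z ∈ C.erase y, 0 ≤ Ω.mu z y) ∧ 0 ≤ Ω.muY y ∧ 0 ≤ Ω.lam y ∧
    ((∑ z ∈ C.erase y, Ω.mu z y) + Ω.muY y + Ω.lam y ≤ M)) ∧
  (∀ z ∈ C, Ω.X z ∈ T)

/-- `B(z|y) = q(x(z)|z) · p(x(z)|y)` where `p(x|y) = f(d(x,y))`, `q(x|y) = g(d(x,y))`. -/
def Bfun (f g : ℝ → ℝ) (Ω : Alloc d) (z y : E d) : ℝ :=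
  g (dist (Ω.X z) z) * f (dist (Ω.X z) y)

/-- The consumption utility `U_c(y|Ω)` of consumer `y`. -/
def Uc (f g I : ℝ → ℝ) (C : Finset (E d)) (rp r0 B0 : ℝ) (Ω : Alloc d) (y : E d) : ℝ :=
  rp * ∑ z ∈ C.erase y, Bfun d f g Ω z y * I (Ω.muI z) * I (Ω.muY y)
  + rp * ∑ z ∈ C.erase y, Bfun d f g Ω z y * I (Ω.mu z y)
  + r0 * B0 * I (Ω.lam y)

/-- The influencer utility `U_infl(μ_infl|Λ,X)`. -/
def Uinfl (f g I : ℝ → ℝ) (C : Finset (E d)) (rp : ℝ) (Ω : Alloc d) : ℝ :=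
  rp * ∑ z ∈ C, ∑ y ∈ C.erase z, Bfun d f g Ω z y * I (Ω.muI z) * I (Ω.muY y)

/-- The producer utility (social support) `U_p(z|Ω)` of producer `z`. -/
def Up (f g I : ℝ → ℝ) (C : Finset (E d)) (rp : ℝ) (Ω : Alloc d) (z : E d) : ℝ :=
  rp * ∑ y ∈ C.erase z, Bfun d f g Ω z y * I (Ω.muI z) * I (Ω.muY y)
  + rp * ∑ y ∈ C.erase z, Bfun d f g Ω z y * I (Ω.mu z y)

/-- The social welfare `Φ(Ω) = Σ_{y∈C} U_c(y|Ω)`. -/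
def Phi (f g I : ℝ → ℝ) (C : Finset (E d)) (rp r0 B0 : ℝ) (Ω : Alloc d) : ℝ :=
  ∑ y ∈ C, Uc d f g I C rp r0 B0 Ω y

/-- The allocation obtained from `Ω` when consumer `y` unilaterally deviates to
the rates `(mu', muY', lam')`. -/
def consDeviate (Ω : Alloc d) (y : E d) (mu' : E d → ℝ) (muY' lam' : ℝ) : Alloc d :=
  { Ω with
    mu := fun z w => if w = y then mu' z else Ω.mu z w,
    muY := Function.update Ω.muY y muY',
    lam := Function.update Ω.lam y lam' }

/-- The influencer's rates are a best response: no feasible deviation of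
`μ_infl` increases the influencer utility. -/
def InflBR (f g I : ℝ → ℝ) (C : Finset (E d)) (rp Minfl : ℝ) (Ω : Alloc d) : Prop :=
  ∀ μI' : E d → ℝ, (∀ z ∈ C, 0 ≤ μI' z) → ((∑ z ∈ C, μI' z) ≤ Minfl) →
    Uinfl d f g I C rp { Ω with muI := μI' } ≤ Uinfl d f g I C rp Ω

/-- Consumer `y`'s rates are a best response in the game with perfect
information: no feasible deviation increases the consumption utility. -/
def ConsBR (f g I : ℝ → ℝ) (C : Finset (E d)) (rp r0 B0 M : ℝ) (Ω : Alloc d) (y : E d) : Prop :=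
  ∀ (mu' : E d → ℝ) (muY' lam' : ℝ),
    (∀ z ∈ C.erase y, 0 ≤ mu' z) → 0 ≤ muY' → 0 ≤ lam' →
    ((∑ z ∈ C.erase y, mu' z) + muY' + lam' ≤ M) →
    Uc d f g I C rp r0 B0 (consDeviate d Ω y mu' muY' lam') y ≤ Uc d f g I C rp r0 B0 Ω y

/-- Producer `z`'s content is a best response: no deviation of the content
topic within `T` increases the producer's social support. -/
def ProdBR (f g I : ℝ → ℝ) (T : Set (E d)) (C : Finset (E d)) (rp : ℝ) (Ω : Alloc d) (z : E d) : Prop :=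
  ∀ x ∈ T, Up d f g I C rp { Ω with X := Function.update Ω.X z x } z ≤ Up d f g I C rp Ω z

/-- Nash equilibrium of the game with perfect information. -/
def NashPerfect (f g I : ℝ → ℝ) (T : Set (E d)) (C : Finset (E d))
    (rp r0 B0 Minfl M : ℝ) (Ω : Alloc d) : Prop :=
  Admissible d T C Minfl M Ω ∧
  InflBR d f g I C rp Minfl Ω ∧
  (∀ y ∈ C, ConsBR d f g I C rp r0 B0 M Ω y) ∧
  (∀ z ∈ C, ProdBR d f g I T C rp Ω z)

/-- Admissibility in the proxy game: in addition, consumers follow no producer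
directly. -/
def ProxyAdmissible (T : Set (E d)) (C : Finset (E d)) (Minfl M : ℝ) (Ω : Alloc d) : Prop :=
  Admissible d T C Minfl M Ω ∧ ∀ y ∈ C, ∀ z ∈ C.erase y, Ω.mu z y = 0

/-- Consumer `y`'s rates are a best response in the proxy game, where the
consumer may only follow the influencer and outside sources. -/
def ProxyConsBR (f g I : ℝ → ℝ) (C : Finset (E d)) (rp r0 B0 M : ℝ) (Ω : Alloc d) (y : E d) : Prop :=
  ∀ (muY' lam' : ℝ), 0 ≤ muY' → 0 ≤ lam' → muY' + lam' ≤ M →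
    Uc d f g I C rp r0 B0 (consDeviate d Ω y (fun _ => 0) muY' lam') y ≤
      Uc d f g I C rp r0 B0 Ω y

/-- Nash equilibrium of the proxy game. -/
def NashProxy (f g I : ℝ → ℝ) (T : Set (E d)) (C : Finset (E d))
    (rp r0 B0 Minfl M : ℝ) (Ω : Alloc d) : Prop :=
  ProxyAdmissible d T C Minfl M Ω ∧
  InflBR d f g I C rp Minfl Ω ∧
  (∀ y ∈ C, ProxyConsBR d f g I C rp r0 B0 M Ω y) ∧
  (∀ z ∈ C, ProdBR d f g I T C rp Ω z)

/-- Tie-break convention (Assumption 4): if no consumer follows the influencer,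
the influencer splits its rate budget uniformly. -/
def TieBreak (C : Finset (E d)) (Minfl : ℝ) (Ω : Alloc d) : Prop :=
  (∑ y ∈ C, Ω.muY y) = 0 → ∀ z ∈ C, Ω.muI z = Minfl / (C.card : ℝ)

/-- **Lemma 11.** Let `M` be a given consumer rate budget.  For
every `κ₀ > 0` and every `α` with `0 < α < 1/2` there exist a positive integer
`N₀` and a constant `ε₀ > 0` such that for `N > N₀` the following holds: if
`Ω* = (μ*_infl, Λ*, X*)` is a Nash equilibrium of the proxy game such that
`Σ_{z≠y} I(μ*_infl(z)) ≥ α·N·κ₀` for all `y ∈ C`, then `μ*(y_infl|y) > ε₀`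
for all `y ∈ C`. -/
theorem stmt15 (d : ℕ) (f g I : ℝ → ℝ)
    (hf_cont : ContinuousOn f (Set.Ici 0)) (hf_anti : StrictAntiOn f (Set.Ici 0))
    (hf_rng : ∀ t ∈ Set.Ici (0 : ℝ), f t ∈ Set.Ioc (0 : ℝ) 1)
    (hg_cont : ContinuousOn g (Set.Ici 0)) (hg_anti : StrictAntiOn g (Set.Ici 0))
    (hg_rng : ∀ t ∈ Set.Ici (0 : ℝ), g t ∈ Set.Ioc (0 : ℝ) 1)
    (hI_diff : ContDiffOn ℝ 1 I (Set.Ici 0))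
    (hI_mono : StrictMonoOn I (Set.Ici 0))
    (hI_conc : StrictConcaveOn ℝ (Set.Ici 0) I)
    (hI_zero : I 0 = 0)
    (hI_lim : Filter.Tendsto I Filter.atTop (nhds 1))
    (T : Set (E d)) (hT_ne : T.Nonempty) (hT_conv : Convex ℝ T) (hT_comp : IsCompact T)
    (rp r0 B0 : ℝ) (hrp : 0 < rp) (hr0 : 0 < r0) (hB0 : 0 < B0)
    (M : ℝ) (hM : 0 < M)
    (κ₀ : ℝ) (hκ₀ : 0 < κ₀) (α : ℝ) (hα0 : 0 < α) (hα : α < 1 / 2) :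
    ∃ (N₀ : ℕ) (ε₀ : ℝ), 0 < ε₀ ∧
      ∀ C : Finset (E d), ↑C ⊆ T → N₀ < C.card →
        ∀ Minfl : ℝ, 0 < Minfl →
          ∀ Ω : Alloc d, NashProxy d f g I T C rp r0 B0 Minfl M Ω →
            (∀ y ∈ C, α * (C.card : ℝ) * κ₀ ≤ ∑ z ∈ C.erase y, I (Ω.muI z)) →
            ∀ y ∈ C, ε₀ < Ω.muY y := by
  obtain ⟨D₀, hD₀⟩ := Metric.isBounded_iff.1 hT_comp.isBounded
  set D : ℝ := max D₀ 0 with hDdef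
  have hD0 : 0 ≤ D := le_max_right _ _
  have hD : ∀ x ∈ T, ∀ y ∈ T, dist x y ≤ D := fun x hx y hy =>
    (hD₀ hx hy).trans (le_max_left _ _)
  have hfD := (hf_rng D hD0).1
  have hgD := (hg_rng D hD0).1
  have hMM : 0 < I M - I (M / 2) := by
    have := hI_mono (show M / 2 ∈ Set.Ici (0 : ℝ) from by simp; linarith)
      (show M ∈ Set.Ici (0 : ℝ) from hM.le) (by linarith)
    linarith
  have hInn : ∀ t, 0 ≤ t → 0 ≤ I t := fun t ht => by
    have := hI_mono.monotoneOn (Set.self_mem_Ici : (0 : ℝ) ∈ Set.Ici (0 : ℝ))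
      (show t ∈ Set.Ici (0 : ℝ) from ht) ht
    linarith
  have hK : 0 < rp * (g D * f D) * (α * κ₀) * (I M - I (M / 2)) := by positivity
  obtain ⟨N₀, hN₀⟩ := exists_nat_gt (r0 * B0 * I M /
    (rp * (g D * f D) * (α * κ₀) * (I M - I (M / 2))))
  refine ⟨N₀, M / 2, by linarith, ?_⟩
  intro C hCT hcard Minfl hMinfl Ω hN hsum y hy
  obtain ⟨⟨⟨hmuI, -, hcons, hX⟩, hmu0⟩, -, hBR, -⟩ := hN
  obtain ⟨-, hmuY, hlam, hbud⟩ := hcons y hy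
  by_contra hlt
  push Not at hlt
  have hz : ∑ z ∈ C.erase y, Ω.mu z y = 0 := Finset.sum_eq_zero (hmu0 y hy)
  rw [hz] at hbud
  have hlamM : I (Ω.lam y) ≤ I M := hI_mono.monotoneOn hlam hM.le (by linarith)
  have hmuM : I (Ω.muY y) ≤ I (M / 2) :=
    hI_mono.monotoneOn hmuY (show (0 : ℝ) ≤ M / 2 by linarith) hlt
  set S := ∑ z ∈ C.erase y, Bfun d f g Ω z y * I (Ω.muI z) with hS
  have h1 : Uc d f g I C rp r0 B0 Ω y = rp * (S * I (Ω.muY y)) + r0 * B0 * I (Ω.lam y) := by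
    have h0 : ∑ z ∈ C.erase y, Bfun d f g Ω z y * I (Ω.mu z y) = 0 :=
      Finset.sum_eq_zero fun z hz => by rw [hmu0 y hy z hz, hI_zero, mul_zero]
    unfold Uc
    rw [h0, ← Finset.sum_mul]
    ring
  have h2 : Uc d f g I C rp r0 B0 (consDeviate d Ω y (fun _ => 0) M 0) y = rp * (S * I M) := by
    simp [Uc, consDeviate, Bfun, hI_zero, hS, Finset.sum_mul]
  have hb := hBR y hy M 0 hM.le le_rfl (by linarith)
  rw [h1, h2] at hb
  have hSge : (g D * f D) * (α * (C.card : ℝ) * κ₀) ≤ S := by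
    calc _ ≤ (g D * f D) * ∑ z ∈ C.erase y, I (Ω.muI z) :=
          mul_le_mul_of_nonneg_left (hsum y hy) (by positivity)
      _ = ∑ z ∈ C.erase y, (g D * f D) * I (Ω.muI z) := Finset.mul_sum _ _ _
      _ ≤ S := by
        refine Finset.sum_le_sum fun z hz => ?_
        have hzC := Finset.mem_of_mem_erase hz
        refine mul_le_mul_of_nonneg_right ?_ (hInn _ (hmuI z hzC))
        have e1 : g D ≤ g (dist (Ω.X z) z) :=
          hg_anti.antitoneOn dist_nonneg hD0 (hD _ (hX z hzC) _ (hCT hzC))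
        have e2 : f D ≤ f (dist (Ω.X z) y) :=
          hf_anti.antitoneOn dist_nonneg hD0 (hD _ (hX z hzC) _ (hCT hy))
        exact mul_le_mul e1 e2 hfD.le (hgD.le.trans e1)
  have hS0 : 0 ≤ S := le_trans (by positivity) hSge
  rw [div_lt_iff₀ hK] at hN₀
  have hc : (N₀ : ℝ) ≤ C.card := by exact_mod_cast hcard.le
  have a1 := mul_le_mul_of_nonneg_right hc hK.le
  have a2 := mul_le_mul_of_nonneg_right hSge (mul_pos hrp hMM).le
  have a3 := mul_le_mul_of_nonneg_left hmuM (mul_nonneg hrp.le hS0)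
  have a4 := mul_le_mul_of_nonneg_left hlamM (mul_pos hr0 hB0).le
  nlinarith
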